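/- arXiv:2605.31448 — 2 statements merged into one kernel-verified Lean document; each statement's English description precedes it below -/
import Mathlib

section
/- Exact entropy identity for the randomized encoding: fix a matrix M ∈ F_2^{q×m}. Let X be a random variable on F_2^m with an arbitrary distribution, let R be uniform on F_2^{mq} and S uniform on F_2^{q(m−1)}, with X, R, S mutually independent. Then H(RE_M(X; R, S)) = mq + q(m−1) + H(MX), where H denotes Shannon entropy in bits. -/
open Finset

/-- Boundary-extended horizontal mask: `sBext m s i k` is the 1-based `s_{i,k}`
for `k ∈ {1,…,m-1}`, with the boundary convention `s_{i,0} = s_{i,m} = 0`. -/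
def sBext (m : ℕ) {q : ℕ} (s : Fin q → Fin (m - 1) → ZMod 2) (i : Fin q) (k : ℕ) :
    ZMod 2 :=
  if h : 1 ≤ k ∧ k ≤ m - 1 then s i ⟨k - 1, by omega⟩ else 0

/-- `REw x r j i` is the output bit `w_{j+1,i}` (1-based column `j+1`, `w`-index
`i ∈ {0,…,q-1}`): `w_{j,0} = x_j ⊕ r_{j,1}` and `w_{j,i} = r_{j,i} ⊕ r_{j,i+1}`;
here `r j i` denotes `r_{j+1,i+1}` in the 1-based notation. -/
def REw {m q : ℕ} (x : Fin m → ZMod 2) (r : Fin m → Fin q → ZMod 2) :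
    Fin m → Fin q → ZMod 2 :=
  fun j i =>
    (if (i : ℕ) = 0 then x j
      else r j ⟨(i : ℕ) - 1, Nat.lt_of_le_of_lt (Nat.sub_le _ _) i.isLt⟩) + r j i

/-- `REz M r s i j` is the output bit `z_{i+1,j+1}` (1-based):
`z_{i,j} = s_{i,j-1} ⊕ s_{i,j} ⊕ M_{i,j}·r_{j,i}`. -/
def REz {m q : ℕ} (M : Fin q → Fin m → ZMod 2) (r : Fin m → Fin q → ZMod 2)
    (s : Fin q → Fin (m - 1) → ZMod 2) : Fin q → Fin m → ZMod 2 :=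
  fun i j => sBext m s i (j : ℕ) + sBext m s i ((j : ℕ) + 1) + M i j * r j i

/-- `aFun w j i = w_{j,0} ⊕ ⋯ ⊕ w_{j,i}` (0-based `i : Fin q`), i.e. the prefix
parity `a_{j,i+1}` in the 1-based notation of the paper. -/
def aFun {m q : ℕ} (w : Fin m → Fin q → ZMod 2) (j : Fin m) (i : Fin q) : ZMod 2 :=
  ∑ k ∈ Finset.Iic i, w j k

/-- The product of two probability mass functions (joint distribution of a pair
of independent random variables). -/
noncomputable def pmfProd {α β : Type*} (p : PMF α) (p' : PMF β) : PMF (α × β) :=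
  p.bind fun a => p'.map fun b => (a, b)

/-- Shannon entropy in bits of a probability mass function on a finite type,
with the convention `0·log₂ 0 = 0`. -/
noncomputable def shannonEntropy {α : Type*} [Fintype α] (p : PMF α) : ℝ :=
  -∑ a, ((p a).toReal * Real.logb 2 (p a).toReal)

lemma pmfProd_apply' {α β : Type*} (p : PMF α) (p' : PMF β) (a : α) (b : β) :
    pmfProd p p' (a, b) = p a * p' b := by
  classical
  rw [pmfProd, PMF.bind_apply, tsum_eq_single a]
  · congr 1
    rw [PMF.map_apply, tsum_eq_single b]
    · simp
    · intro b' hb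
      rw [if_neg]
      simpa using hb.symm
  · intro a' ha
    rw [PMF.map_apply]
    simp [ha.symm]

lemma pmfProd_uniform {α β : Type*} [Fintype α] [Fintype β] [Nonempty α] [Nonempty β] :
    pmfProd (PMF.uniformOfFintype α) (PMF.uniformOfFintype β)
      = PMF.uniformOfFintype (α × β) := by
  ext ⟨a, b⟩
  rw [pmfProd_apply']
  simp only [PMF.uniformOfFintype_apply, Fintype.card_prod, Nat.cast_mul]
  rw [ENNReal.mul_inv] <;> simp

lemma abstract_apply {α β γ δ : Type*} [Fintype β] [Nonempty β]
    (F : α → β → γ) (G : γ → δ) (f : α → δ)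
    (hinj : ∀ x, Function.Injective (F x)) (hG : ∀ x b, G (F x b) = f x)
    (hs : ∀ x c, G c = f x → ∃ b, F x b = c) (μ : PMF α) (c : γ) :
    ((pmfProd μ (PMF.uniformOfFintype β)).map fun xb => F xb.1 xb.2) c
      = (μ.map f) (G c) * (Fintype.card β : ENNReal)⁻¹ := by
  classical
  have h1 : ((pmfProd μ (PMF.uniformOfFintype β)).map fun xb => F xb.1 xb.2)
      = μ.bind fun x => (PMF.uniformOfFintype β).map (F x) := by
    rw [pmfProd, PMF.map_bind]
    congr 1
    funext x
    rw [PMF.map_comp]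
    rfl
  rw [h1, PMF.bind_apply, PMF.map_apply, ← ENNReal.tsum_mul_right]
  congr 1
  funext x
  by_cases h : G c = f x
  · obtain ⟨b, hb⟩ := hs x c h
    rw [if_pos h, PMF.map_apply, tsum_eq_single b]
    · simp [hb]
    · intro b' hb'
      rw [if_neg]
      intro h'
      exact hb' (hinj x (by rw [hb, h']))
  · rw [if_neg h, PMF.map_apply]
    have : ∀ b, c ≠ F x b := by
      rintro b rfl
      exact h (hG x b)
    simp [this]

lemma abstract_entropy {α β γ δ : Type*} [Fintype β] [Nonempty β] [Fintype γ] [Fintype δ]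
    (F : α → β → γ) (G : γ → δ) (f : α → δ)
    (hinj : ∀ x, Function.Injective (F x)) (hG : ∀ x b, G (F x b) = f x)
    (hs : ∀ x c, G c = f x → ∃ b, F x b = c) (μ : PMF α) :
    shannonEntropy ((pmfProd μ (PMF.uniformOfFintype β)).map fun xb => F xb.1 xb.2)
      = Real.logb 2 (Fintype.card β) + shannonEntropy (μ.map f) := by
  classical
  have hN : (0 : ℝ) < Fintype.card β := by exact_mod_cast Fintype.card_pos
  have hsum : ∑ y, ((μ.map f) y).toReal = 1 := by
    rw [← ENNReal.toReal_sum (fun y _ => PMF.apply_ne_top _ y), ← tsum_fintype (L := .unconditional _),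
      PMF.tsum_coe]
    rfl
  unfold shannonEntropy
  simp only [abstract_apply F G f hinj hG hs μ, ENNReal.toReal_mul, ENNReal.toReal_inv,
    ENNReal.toReal_natCast]
  set N : ℝ := (Fintype.card β : ℝ) with hNdef
  set p : δ → ℝ := fun y => ((μ.map f) y).toReal with hp
  have key : ∀ y, ∑ c with G c = y, (p (G c) * N⁻¹ * Real.logb 2 (p (G c) * N⁻¹))
      = p y * Real.logb 2 (p y) - p y * Real.logb 2 N := by
    intro y
    have e : ∑ c with G c = y, (p (G c) * N⁻¹ * Real.logb 2 (p (G c) * N⁻¹))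
      = ∑ c with G c = y, (p y * N⁻¹ * Real.logb 2 (p y * N⁻¹)) := by
      apply Finset.sum_congr rfl
      intro c hc
      rw [(Finset.mem_filter.1 hc).2]
    rw [e, Finset.sum_const, nsmul_eq_mul]
    by_cases h0 : p y = 0
    · simp [h0]
    · have : y ∈ (μ.map f).support := by
        rw [PMF.mem_support_iff]
        intro h
        apply h0
        simp only [hp, h, ENNReal.toReal_zero]
      obtain ⟨x, -, hx⟩ := (PMF.mem_support_map_iff _ _ _).1 this
      have hc : #{c | G c = y} = Fintype.card β := by
        rw [← Finset.card_univ, ← Finset.card_image_of_injective _ (hinj x)]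
        congr 1
        ext c
        simp only [Finset.mem_filter, Finset.mem_univ, true_and, Finset.mem_image]
        constructor
        · intro h
          exact hs x c (h.trans hx.symm)
        · rintro ⟨b, rfl⟩
          rw [hG, hx]
      rw [hc, Real.logb_mul h0 (inv_ne_zero hN.ne'), Real.logb_inv, ← hNdef]
      field_simp
      ring
  have : ∑ c, (p (G c) * N⁻¹ * Real.logb 2 (p (G c) * N⁻¹))
      = ∑ y, (p y * Real.logb 2 (p y) - p y * Real.logb 2 N) := by
    rw [← Finset.sum_fiberwise Finset.univ G]
    exact Finset.sum_congr rfl fun y _ => key y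
  change -∑ c, (p (G c) * N⁻¹ * Real.logb 2 (p (G c) * N⁻¹)) = _ + -∑ y, (p y * Real.logb 2 (p y))
  rw [this, Finset.sum_sub_distrib, ← Finset.sum_mul, hsum]
  ring

/-- Prefix sums of a row, over natural indices. -/
def prefA {q : ℕ} (w : Fin q → ZMod 2) (k : ℕ) : ZMod 2 :=
  ∑ l ∈ Finset.range k, if h : l < q then w ⟨l, h⟩ else 0

lemma prefA_succ {q : ℕ} (w : Fin q → ZMod 2) (k : ℕ) (h : k < q) :
    prefA w (k + 1) = prefA w k + w ⟨k, h⟩ := by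
  rw [prefA, Finset.sum_range_succ, dif_pos h, prefA]

lemma prefA_full {q : ℕ} (w : Fin q → ZMod 2) : prefA w q = ∑ l, w l := by
  rw [prefA, ← Fin.sum_univ_eq_sum_range (fun l => if h : l < q then w ⟨l, h⟩ else 0)]
  simp

lemma prefA_REw {m q : ℕ} (x : Fin m → ZMod 2) (r : Fin m → Fin q → ZMod 2) (j : Fin m)
    (k : ℕ) (h : k < q) : prefA (REw x r j) (k + 1) = x j + r j ⟨k, h⟩ := by
  induction k with
  | zero => rw [prefA_succ _ _ h]; simp [prefA, REw]
  | succ k ih =>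
    rw [prefA_succ _ _ h, ih (by omega)]
    simp only [REw, Nat.add_sub_cancel, Nat.add_eq_zero_iff, one_ne_zero, and_false, if_false]
    linear_combination (r j ⟨k, by omega⟩) * (CharTwo.two_eq_zero (R := ZMod 2))

lemma REw_prefA {m q : ℕ} (x : Fin m → ZMod 2) (w : Fin m → Fin q → ZMod 2) :
    REw x (fun j i => x j + prefA (w j) (i + 1)) = w := by
  funext j ⟨i, hi⟩
  cases i with
  | zero =>
    simp only [REw, if_true]
    rw [prefA_succ _ _ hi]
    simp only [prefA, Finset.range_zero, Finset.sum_empty]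
    linear_combination (x j) * (CharTwo.two_eq_zero (R := ZMod 2))
  | succ i =>
    simp only [REw, Nat.add_sub_cancel, Nat.add_eq_zero_iff, one_ne_zero, and_false, if_false]
    rw [prefA_succ _ _ hi]
    linear_combination (x j + prefA (w j) (i + 1)) * (CharTwo.two_eq_zero (R := ZMod 2))

lemma sBext_of_REz {m q : ℕ} (M : Fin q → Fin m → ZMod 2) (r : Fin m → Fin q → ZMod 2)
    (s : Fin q → Fin (m - 1) → ZMod 2) (i : Fin q) (k : ℕ) (hk : k ≤ m) :
    sBext m s i k = prefA (fun j => REz M r s i j + M i j * r j i) k := by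
  induction k with
  | zero => simp [sBext, prefA]
  | succ k ih =>
    rw [prefA_succ _ _ hk, ← ih (by omega)]
    simp only [REz]
    linear_combination (-sBext m s i k - M i ⟨k, hk⟩ * r ⟨k, hk⟩ i) *
      (CharTwo.two_eq_zero (R := ZMod 2))

/-- The decoder. -/
def decG {m q : ℕ} (M : Fin q → Fin m → ZMod 2)
    (c : (Fin m → Fin q → ZMod 2) × (Fin q → Fin m → ZMod 2)) : Fin q → ZMod 2 :=
  fun i => ∑ j, (c.2 i j + M i j * prefA (c.1 j) (i + 1))

lemma sBext_last {m q : ℕ} (hm : 1 ≤ m) (s : Fin q → Fin (m - 1) → ZMod 2) (i : Fin q) :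
    sBext m s i m = 0 := by
  rw [sBext, dif_neg]
  omega

/-- Exact entropy identity for the randomized encoding: with
`X` arbitrary on `F_2^m`, `R` uniform on `F_2^{mq}`, `S` uniform on
`F_2^{q(m−1)}`, mutually independent,
`H(RE_M(X; R, S)) = mq + q(m−1) + H(MX)`. -/
theorem entropy_identity {m q : ℕ} (hm : 1 ≤ m) (hq : 1 ≤ q)
    (M : Fin q → Fin m → ZMod 2) (μ : PMF (Fin m → ZMod 2)) :
    shannonEntropy
        ((pmfProd μ (pmfProd (PMF.uniformOfFintype (Fin m → Fin q → ZMod 2))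
              (PMF.uniformOfFintype (Fin q → Fin (m - 1) → ZMod 2)))).map
          (fun xrs => (REw xrs.1 xrs.2.1, REz M xrs.2.1 xrs.2.2)))
      = (m * q : ℕ) + (q * (m - 1) : ℕ) +
          shannonEntropy (μ.map fun x => fun i : Fin q => ∑ j, M i j * x j) := by
  rw [pmfProd_uniform]
  have := abstract_entropy
    (F := fun (x : Fin m → ZMod 2) (rs : (Fin m → Fin q → ZMod 2) × (Fin q → Fin (m - 1) → ZMod 2)) =>
      (REw x rs.1, REz M rs.1 rs.2)) (G := decG M)
    (f := fun x => fun i : Fin q => ∑ j, M i j * x j) ?_ ?_ ?_ μ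
  · rw [this]
    congr 1
    have hc : (Fintype.card ((Fin m → Fin q → ZMod 2) × (Fin q → Fin (m - 1) → ZMod 2)) : ℝ)
        = (2 : ℝ) ^ (m * q + q * (m - 1)) := by
      simp [ZMod.card, pow_add, ← pow_mul, mul_comm]
    rw [hc, Real.logb_pow, Real.logb_self_eq_one (by norm_num)]
    push_cast
    ring
  · rintro x ⟨r, s⟩ ⟨r', s'⟩ h
    simp only [Prod.mk.injEq] at h
    obtain ⟨h1, h2⟩ := h
    have hr : r = r' := by
      funext j ⟨i, hi⟩
      have := prefA_REw x r j i hi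
      rw [h1, prefA_REw x r' j i hi] at this
      exact (add_left_cancel this).symm
    subst hr
    congr 1
    funext i ⟨k, hk⟩
    have e1 := sBext_of_REz M r s i (k + 1) (by omega)
    rw [h2, ← sBext_of_REz M r s' i (k + 1) (by omega)] at e1
    have hk' : 1 ≤ k + 1 ∧ k + 1 ≤ m - 1 := by omega
    simpa [sBext, hk'] using e1
  · rintro x ⟨r, s⟩
    funext i
    have e := sBext_of_REz M r s i m le_rfl
    rw [sBext_last hm, prefA_full] at e
    simp only [decG]
    simp only [prefA_REw _ _ _ _ i.isLt, mul_add, Fin.eta]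
    rw [← zero_add (∑ j, M i j * x j), e, ← Finset.sum_add_distrib]
    exact Finset.sum_congr rfl fun j _ => by ring
  · rintro x ⟨w, z⟩ h
    set r : Fin m → Fin q → ZMod 2 := fun j i => x j + prefA (w j) (i + 1) with hr
    let d : Fin q → Fin m → ZMod 2 := fun i j => z i j + M i j * r j i
    let s : Fin q → Fin (m - 1) → ZMod 2 := fun i k => prefA (d i) (k + 1)
    have hd : ∀ i, prefA (d i) m = 0 := by
      intro i
      have hi := congrFun h i
      simp only [decG] at hi
      rw [prefA_full]
      have : ∑ j, d i j = ∑ j, (z i j + M i j * prefA (w j) (i + 1)) + ∑ j, M i j * x j := by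
        rw [← Finset.sum_add_distrib]
        exact Finset.sum_congr rfl fun j _ => by simp only [d, hr]; ring
      rw [this, hi]
      exact CharTwo.add_self_eq_zero _
    have hs : ∀ i k, k ≤ m → sBext m s i k = prefA (d i) k := by
      intro i k hk
      by_cases h1 : 1 ≤ k ∧ k ≤ m - 1
      · simp [sBext, h1, s]
      · rw [sBext, dif_neg h1]
        rcases Nat.eq_zero_or_pos k with rfl | hk0
        · simp [prefA]
        · have : k = m := by omega
          rw [this, hd]
    refine ⟨(r, s), ?_⟩
    refine Prod.ext (REw_prefA x w) ?_
    funext i j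
    simp only [REz]
    rw [hs i j j.isLt.le, hs i (j + 1) j.isLt, prefA_succ _ _ j.isLt]
    simp only [Fin.eta, d]
    linear_combination (prefA (d i) j + M i j * r j i) * (CharTwo.two_eq_zero (R := ZMod 2))
end

section
/- Collision reduction for the constant-local hash: fix integers k, n, μ ≥ 1, a real β with 0 < β ≤ 1, a matrix M ∈ F_2^{μ×n}, and an injective map Exp : F_2^k → F_2^n such that wt(Exp(x)) ≤ βn/2 for every x ∈ F_2^k. Define H_M(x, r, s) = RE_M(Exp(x); r, s). Suppose H_M(x, r, s) = H_M(x', r', s'). Then: (i) if x ≠ x', the vector v = Exp(x) ⊕ Exp(x') is nonzero, satisfies Mv = 0, and has Hamming weight wt(v) ≤ βn; and (ii) if x = x', then r = r' and s = s'. In particular, any nontrivial collision of H_M yields a nonzero vector of Hamming weight at most βn in the kernel of M. -/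
open Finset

/-- Hamming weight of a vector over `F_2`. -/
def hammingWt {n : ℕ} (v : Fin n → ZMod 2) : ℕ :=
  (Finset.univ.filter fun j => v j ≠ 0).card

theorem zmod2_add_self (a : ZMod 2) : a + a = 0 := CharTwo.add_self_eq_zero a

theorem zmod2_tele (f : ℕ → ZMod 2) (m : ℕ) :
    ∑ j ∈ Finset.range m, (f j + f (j + 1)) = f 0 + f m := by
  induction m with
  | zero => simp [zmod2_add_self]
  | succ k ih =>
    rw [Finset.sum_range_succ, ih]
    linear_combination zmod2_add_self (f k)

theorem REw_diff {m q : ℕ} (x x' : Fin m → ZMod 2) (r r' : Fin m → Fin q → ZMod 2)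
    (h : REw x r = REw x' r') (j : Fin m) (i : ℕ) (hi : i < q) :
    r j ⟨i, hi⟩ + r' j ⟨i, hi⟩ = x j + x' j := by
  induction i with
  | zero =>
    have h0 := congrFun (congrFun h j) ⟨0, hi⟩
    simp only [REw, if_true] at h0
    linear_combination h0 - zmod2_add_self (x j) + zmod2_add_self (r' j ⟨0, hi⟩)
  | succ k ih =>
    have h0 := congrFun (congrFun h j) ⟨k + 1, hi⟩
    simp only [REw, Nat.succ_ne_zero, if_false, Nat.add_sub_cancel] at h0
    have h1 := ih (by omega)
    linear_combination h0 + h1 - zmod2_add_self (r j ⟨k, by omega⟩)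
      + zmod2_add_self (r' j ⟨k + 1, hi⟩)

theorem hammingWt_add_le {n : ℕ} (u v : Fin n → ZMod 2) :
    hammingWt (fun j => u j + v j) ≤ hammingWt u + hammingWt v := by
  unfold hammingWt
  refine le_trans (Finset.card_le_card ?_) (Finset.card_union_le _ _)
  intro j hj
  simp only [Finset.mem_filter, Finset.mem_univ, true_and, Finset.mem_union] at hj ⊢
  by_contra hc
  push Not at hc
  exact hj (by rw [hc.1, hc.2, add_zero])

/-- Collision reduction for the constant-local hash
`H_M(x, r, s) = RE_M(Exp(x); r, s)`: if `H_M(x, r, s) = H_M(x', r', s')`, then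
(i) if `x ≠ x'` the vector `v = Exp(x) ⊕ Exp(x')` is nonzero, lies in the
kernel of `M`, and has Hamming weight at most `βn`; and (ii) if `x = x'` then
`r = r'` and `s = s'`. -/
theorem hash_collision_reduction {k n mu : ℕ} (hk : 1 ≤ k) (hn : 1 ≤ n)
    (hmu : 1 ≤ mu) (β : ℝ) (hβ0 : 0 < β) (hβ1 : β ≤ 1)
    (M : Fin mu → Fin n → ZMod 2)
    (Exp : (Fin k → ZMod 2) → (Fin n → ZMod 2))
    (hExpInj : Function.Injective Exp)
    (hExpWt : ∀ x : Fin k → ZMod 2, (hammingWt (Exp x) : ℝ) ≤ β * n / 2)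
    (x x' : Fin k → ZMod 2) (r r' : Fin n → Fin mu → ZMod 2)
    (s s' : Fin mu → Fin (n - 1) → ZMod 2)
    (hcol : (REw (Exp x) r, REz M r s) = (REw (Exp x') r', REz M r' s')) :
    (x ≠ x' →
        (fun j => Exp x j + Exp x' j) ≠ (0 : Fin n → ZMod 2) ∧
        (∀ i : Fin mu, ∑ j, M i j * (Exp x j + Exp x' j) = 0) ∧
        (hammingWt (fun j => Exp x j + Exp x' j) : ℝ) ≤ β * n) ∧
      (x = x' → r = r' ∧ s = s') := by
  obtain ⟨hw, hz⟩ := Prod.mk.inj hcol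
  have hr : ∀ j i, r j i + r' j i = Exp x j + Exp x' j := fun j i =>
    REw_diff _ _ _ _ hw j i.1 i.2
  have hD : ∀ (i : Fin mu) (j : Fin n),
      (sBext n s i j + sBext n s' i j) + (sBext n s i (j + 1) + sBext n s' i (j + 1))
        = M i j * (Exp x j + Exp x' j) := by
    intro i j
    have h0 := congrFun (congrFun hz i) j
    simp only [REz] at h0
    rw [← hr j i]
    linear_combination h0 + zmod2_add_self (sBext n s' i j)
      + zmod2_add_self (sBext n s' i (j + 1)) - zmod2_add_self (M i j * r j i)
  refine ⟨fun hne => ⟨?_, ?_, ?_⟩, ?_⟩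
  · intro h0
    apply hne
    apply hExpInj
    funext j
    have h1 : Exp x j + Exp x' j = 0 := congrFun h0 j
    linear_combination h1 - zmod2_add_self (Exp x' j)
  · intro i
    simp only [← hD i]
    rw [Fin.sum_univ_eq_sum_range (fun j => (sBext n s i j + sBext n s' i j)
      + (sBext n s i (j + 1) + sBext n s' i (j + 1))) n,
      zmod2_tele (fun j => sBext n s i j + sBext n s' i j) n]
    have hnn : ¬ (n ≤ n - 1) := by omega
    simp [sBext, hnn]
  · have h1 : (hammingWt (fun j => Exp x j + Exp x' j) : ℝ)
        ≤ hammingWt (Exp x) + hammingWt (Exp x') := by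
      exact_mod_cast hammingWt_add_le (Exp x) (Exp x')
    linarith [hExpWt x, hExpWt x']
  · intro hx
    subst hx
    refine ⟨?_, ?_⟩
    · funext j i
      linear_combination hr j i + zmod2_add_self (Exp x j) - zmod2_add_self (r' j i)
    · have hS : ∀ (i : Fin mu) (j : ℕ), j ≤ n → sBext n s i j + sBext n s' i j = 0 := by
        intro i j
        induction j with
        | zero => intro _; simp [sBext]
        | succ p ih =>
          intro hp
          have h1 := hD i ⟨p, hp⟩
          have h2 := ih (by omega)
          simp only at h1
          rw [h2, zmod2_add_self, mul_zero, zero_add] at h1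
          exact h1
      funext i t
      have ht := t.2
      have h1 := hS i (t + 1) (by omega)
      have h2 : 1 ≤ (t : ℕ) + 1 ∧ (t : ℕ) + 1 ≤ n - 1 := by omega
      simp only [sBext, dif_pos h2, Nat.add_sub_cancel, Fin.eta] at h1
      linear_combination h1 - zmod2_add_self (s' i t)
end
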